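/- arXiv:1103.4633 — 2 statements merged into one kernel-verified Lean document; each statement's English description precedes it below -/
import Mathlib

section
/- Let k ≥ 1 and let g : ℂ^k → ℂ^k be complex-analytic on all of ℂ^k such that the Jacobian determinant z ↦ det(Dg(z)) is not identically zero. For n ≥ 1 and x ∈ ℂ^k set μ_n(x) := k + ord_x(det D(g^n)), where g^n is the n-fold iterate of g. Then for every n ≥ 1 the function det D(g^n) is not identically zero, every μ_n(x) is finite, and for every complex-analytic h : ℂ^k → ℂ not identically zero and every x ∈ ℂ^k one has ord_x(h ∘ g^n) ≤ μ_n(x) · ord_{g^n(x)}(h). -/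
/-- The order of vanishing of a function at a point: the smallest `n ∈ ℕ` such that the
`n`-th iterated Fréchet derivative of `f` at `p` is nonzero, as an element of `ℕ∞`
(so it is `⊤` when all iterated derivatives vanish). -/
noncomputable def ordAt {E F : Type*} [NormedAddCommGroup E] [NormedSpace ℂ E]
    [NormedAddCommGroup F] [NormedSpace ℂ F] (f : E → F) (p : E) : ℕ∞ :=
  sInf ((fun n : ℕ => (n : ℕ∞)) '' {n : ℕ | iteratedFDeriv ℂ n f p ≠ 0})


/-!
The order of a multivariate analytic function at `p` is the smallest order of its restrictions
to complex lines through `p`, so the order of a product is read off along one common generic line.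

Write `J = det Dg`. By Cramer's rule every vector `v` admits an analytic field `w` with
`Dg(z) w(z) = J(z) v`, and the chain rule gives `D(h ∘ g)(w) = J · (∂ᵥh ∘ g)`. A derivative lowers
the order by at most one, hence `ord (h ∘ g) ≤ 1 + ord J + ord (∂ᵥh ∘ g)`. If `h` vanishes at
`g x`, some direction `v` makes `ord (∂ᵥh)` smaller than `ord h`, and induction on `ord h` yields
`ord_x (h ∘ g) ≤ (1 + ord_x J) · ord_{g x} h`, with `1` in place of the dimension `k`. Applied to
`h = J`, the same inequality bounds the order of the factor `J ∘ gⁿ` of `det D(gⁿ⁺¹)`.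
-/

open Filter Topology
open scoped ContDiff Matrix

section Order

variable {E F : Type*} [NormedAddCommGroup E] [NormedSpace ℂ E]
  [NormedAddCommGroup F] [NormedSpace ℂ F] {f : E → F} {p : E}

theorem natCast_le_ordAt_iff {n : ℕ} :
    (n : ℕ∞) ≤ ordAt f p ↔ ∀ i < n, iteratedFDeriv ℂ i f p = 0 := by
  simp only [ordAt, le_sInf_iff, Set.forall_mem_image, Set.mem_ofPred_eq, Nat.cast_le]
  exact forall_congr' fun i => by rw [← not_lt, not_imp_not]

theorem ordAt_eq_top_iff : ordAt f p = ⊤ ↔ ∀ n, iteratedFDeriv ℂ n f p = 0 := by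
  simp only [ENat.eq_top_iff_forall_ge, natCast_le_ordAt_iff]
  exact ⟨fun vanish n => vanish (n + 1) n n.lt_succ_self, fun vanish _ i _ => vanish i⟩

theorem iteratedFDeriv_ne_zero_of_ordAt_eq {n : ℕ} (hn : ordAt f p = n) :
    iteratedFDeriv ℂ n f p ≠ 0 := by
  intro vanish
  have succ_le : ((n + 1 : ℕ) : ℕ∞) ≤ ordAt f p :=
    natCast_le_ordAt_iff.2 <| Nat.forall_lt_succ_right.2 ⟨natCast_le_ordAt_iff.1 hn.ge, vanish⟩
  rw [hn, Nat.cast_le] at succ_le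
  exact n.not_succ_le_self succ_le

theorem ordAt_eq_zero_of_ne_zero (hp : f p ≠ 0) : ordAt f p = 0 := by
  refine nonpos_iff_eq_zero.1 (sInf_le ⟨0, fun vanish => hp ?_, rfl⟩)
  simpa using DFunLike.congr_fun vanish 0

theorem ordAt_zero : ordAt (0 : E → F) p = ⊤ :=
  ordAt_eq_top_iff.2 fun n => by simp [iteratedFDeriv_zero]

theorem ordAt_congr {f₁ : E → F} (h : f =ᶠ[𝓝 p] f₁) : ordAt f p = ordAt f₁ p := by
  simp only [ordAt, (h.iteratedFDeriv ℂ _).eq_of_nhds]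

theorem ordAt_le_ordAt_fderiv_add_one : ordAt f p ≤ ordAt (fderiv ℂ f) p + 1 := by
  refine ENat.forall_natCast_le_iff_le.1 fun n hn => ?_
  cases n with
  | zero => simp
  | succ n =>
    push_cast
    gcongr
    refine natCast_le_ordAt_iff.2 fun i hi => ?_
    rw [← norm_eq_zero, norm_iteratedFDeriv_fderiv,
      natCast_le_ordAt_iff.1 hn (i + 1) (Nat.succ_lt_succ hi), norm_zero]

end Order

section Lines

theorem analyticAt_clm_apply {D E F : Type*} [NormedAddCommGroup D] [NormedSpace ℂ D]
    [NormedAddCommGroup E] [NormedSpace ℂ E] [NormedAddCommGroup F] [NormedSpace ℂ F]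
    {L : D → E →L[ℂ] F} {w : D → E} {p : D} (hL : AnalyticAt ℂ L p) (hw : AnalyticAt ℂ w p) :
    AnalyticAt ℂ (fun z => L z (w z)) p :=
  ((ContinuousLinearMap.id ℂ (E →L[ℂ] F)).analyticAt_bilinear (L p, w p)).comp₂ hL hw

variable {E F : Type*} [NormedAddCommGroup E] [NormedSpace ℂ E]
  [NormedAddCommGroup F] [NormedSpace ℂ F] {f : E → F} {p : E}

theorem analyticAt_comp_add_smul {t : ℂ} {v : E} (hf : AnalyticAt ℂ f (p + t • v)) :
    AnalyticAt ℂ (fun s : ℂ => f (p + s • v)) t :=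
  hf.comp (f := fun s : ℂ => p + s • v) (by fun_prop)

theorem iteratedDeriv_comp_add_smul {n : ℕ} {t : ℂ} {v : E}
    (hf : ContDiffAt ℂ n f (p + t • v)) :
    iteratedDeriv n (fun s : ℂ => f (p + s • v)) t =
      iteratedFDeriv ℂ n f (p + t • v) (fun _ => v) := by
  induction n generalizing t with
  | zero => simp
  | succ n ih =>
    have line_tendsto : Tendsto (fun s : ℂ => p + s • v) (𝓝 t) (𝓝 (p + t • v)) :=
      Continuous.tendsto (by fun_prop) t
    have near : iteratedDeriv n (fun s : ℂ => f (p + s • v)) =ᶠ[𝓝 t]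
        fun s => iteratedFDeriv ℂ n f (p + s • v) (fun _ => v) := by
      filter_upwards [line_tendsto.eventually (hf.eventually (by simp))] with s hs
      exact ih (hs.of_le (by norm_cast; exact n.le_succ))
    rw [iteratedDeriv_succ, near.deriv_eq, ContDiffAt.deriv_fderiv_add_smul (by exact_mod_cast hf)]

theorem iteratedFDeriv_eq_zero_iff_forall_diagonal {n : ℕ} (hf : ContDiffAt ℂ ω f p) :
    iteratedFDeriv ℂ n f p = 0 ↔ ∀ v, iteratedFDeriv ℂ n f p (fun _ => v) = 0 := by
  refine ⟨fun vanish v => by rw [vanish, zero_apply], fun vanish => ?_⟩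
  ext v
  -- Differentiating the diagonal `n` times symmetrizes, and `Dⁿf(p)` is already symmetric.
  have factorial_smul : n.factorial • iteratedFDeriv ℂ n f p v = 0 := by
    calc n.factorial • iteratedFDeriv ℂ n f p v
        = ∑ σ : Equiv.Perm (Fin n), iteratedFDeriv ℂ n f p (v ∘ σ) := by
          simp [hf.iteratedFDeriv_comp_perm, Fintype.card_perm]
      _ = iteratedFDeriv ℂ n (fun z => iteratedFDeriv ℂ n f p (fun _ => z)) 0 v :=
          ((iteratedFDeriv ℂ n f p).iteratedFDeriv_comp_diagonal 0 v).symm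
      _ = 0 := by simp [vanish]
  rw [← Nat.cast_smul_eq_nsmul ℂ] at factorial_smul
  exact (smul_eq_zero.1 factorial_smul).resolve_left (mod_cast n.factorial_ne_zero)

variable [CompleteSpace F]

theorem natCast_le_analyticOrderAt_comp_add_smul_iff (hf : AnalyticAt ℂ f p) {n : ℕ} {v : E} :
    (n : ℕ∞) ≤ analyticOrderAt (fun t : ℂ => f (p + t • v)) 0 ↔
      ∀ i < n, iteratedFDeriv ℂ i f p (fun _ => v) = 0 := by
  have hp : p + (0 : ℂ) • v = p := by simp
  rw [natCast_le_analyticOrderAt_iff_iteratedDeriv_eq_zero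
    (analyticAt_comp_add_smul (hp.symm ▸ hf))]
  refine forall₂_congr fun i _ => ?_
  rw [iteratedDeriv_comp_add_smul (hp.symm ▸ hf.contDiffAt), hp]

theorem ordAt_eq_iInf_analyticOrderAt (hf : AnalyticAt ℂ f p) :
    ordAt f p = ⨅ v : E, analyticOrderAt (fun t : ℂ => f (p + t • v)) 0 := by
  refine ENat.eq_of_forall_natCast_le_iff fun n => ?_
  simp only [le_iInf_iff, natCast_le_analyticOrderAt_comp_add_smul_iff hf, natCast_le_ordAt_iff,
    iteratedFDeriv_eq_zero_iff_forall_diagonal hf.contDiffAt]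
  exact ⟨fun vanish v i hi => vanish i hi v, fun vanish i hi v => vanish v i hi⟩

theorem ordAt_le_analyticOrderAt_comp_add_smul (hf : AnalyticAt ℂ f p) (v : E) :
    ordAt f p ≤ analyticOrderAt (fun t : ℂ => f (p + t • v)) 0 :=
  (ordAt_eq_iInf_analyticOrderAt hf).trans_le (iInf_le _ v)

theorem analyticOrderAt_comp_add_smul_le_of_iteratedFDeriv_ne_zero (hf : AnalyticAt ℂ f p)
    {n : ℕ} {v : E} (hv : iteratedFDeriv ℂ n f p (fun _ => v) ≠ 0) :
    analyticOrderAt (fun t : ℂ => f (p + t • v)) 0 ≤ n := by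
  by_contra! lt_order
  exact hv ((natCast_le_analyticOrderAt_comp_add_smul_iff hf).1
    (by exact_mod_cast Order.add_one_le_of_lt lt_order) n n.lt_succ_self)

theorem ordAt_ne_top (hf : ∀ z, AnalyticAt ℂ f z) (hne : ∃ z, f z ≠ 0) (p : E) :
    ordAt f p ≠ ⊤ := by
  obtain ⟨z, hz⟩ := hne
  intro order_top
  have line_order_top : analyticOrderAt (fun t : ℂ => f (p + t • (z - p))) 0 = ⊤ :=
    top_le_iff.1 (order_top ▸ ordAt_le_analyticOrderAt_comp_add_smul (hf p) (z - p))
  rw [AnalyticOnNhd.analyticOrderAt_eq_top_iff_eq_zero 0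
    fun _ => analyticAt_comp_add_smul (hf _)] at line_order_top
  exact hz (by simpa using congrFun line_order_top 1)

theorem exists_ordAt_fderiv_apply_add_one_le (hf : AnalyticAt ℂ f p) (hp : f p = 0) :
    ∃ v : E, ordAt (fun z => fderiv ℂ f z v) p + 1 ≤ ordAt f p := by
  obtain ⟨v, hv⟩ : ∃ v : E, analyticOrderAt (fun t : ℂ => f (p + t • v)) 0 = ordAt f p := by
    rw [ordAt_eq_iInf_analyticOrderAt hf]
    exact ciInf_mem _
  have line_analytic : AnalyticAt ℂ (fun t : ℂ => f (p + t • v)) 0 :=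
    analyticAt_comp_add_smul (by simpa using hf)
  have line_tendsto : Tendsto (fun t : ℂ => p + t • v) (𝓝 0) (𝓝 p) :=
    Continuous.tendsto' (by fun_prop) 0 p (by simp)
  have deriv_line : deriv (fun t : ℂ => f (p + t • v)) =ᶠ[𝓝 0]
      fun t => fderiv ℂ f (p + t • v) v := by
    filter_upwards [line_tendsto.eventually hf.eventually_analyticAt] with t ht
    exact ht.differentiableAt.deriv_comp_add_smul
  refine ⟨v, ?_⟩
  calc ordAt (fun z => fderiv ℂ f z v) p + 1
      ≤ analyticOrderAt (fun t : ℂ => fderiv ℂ f (p + t • v) v) 0 + 1 := by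
        gcongr
        exact ordAt_le_analyticOrderAt_comp_add_smul
          (f := fun z => fderiv ℂ f z v) (analyticAt_clm_apply hf.fderiv analyticAt_const) v
    _ = analyticOrderAt (deriv fun t : ℂ => f (p + t • v)) 0 + 1 := by
        rw [analyticOrderAt_congr deriv_line]
    _ = analyticOrderAt (fun t : ℂ => f (p + t • v)) 0 := by
        simpa [hp] using line_analytic.analyticOrderAt_deriv_add_one
    _ = ordAt f p := hv

end Lines

section Products

variable {E F G : Type*} [NormedAddCommGroup E] [NormedSpace ℂ E]
  [NormedAddCommGroup F] [NormedSpace ℂ F] [NormedAddCommGroup G] [NormedSpace ℂ G] {p : E}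

theorem dense_setOf_ne_zero {f : E → F} (hf : ∀ z, AnalyticAt ℂ f z) (hne : ∃ z, f z ≠ 0) :
    Dense {z | f z ≠ 0} := by
  obtain ⟨w, hw⟩ := hne
  refine fun z => mem_closure_iff_frequently.2 fun f_eventually_zero => hw ?_
  exact AnalyticOnNhd.eqOn_zero_of_preconnected_of_eventuallyEq_zero (fun z _ => hf z)
    isPreconnected_univ (Set.mem_univ z) (f_eventually_zero.mono fun _ => not_not.1)
    (Set.mem_univ w)

theorem analyticAt_apply_diagonal {n : ℕ} (L : E [×n]→L[ℂ] F) (v : E) :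
    AnalyticAt ℂ (fun u => L fun _ => u) v :=
  L.analyticAt.comp (f := fun u _ => u) (AnalyticAt.pi fun _ => analyticAt_id)

theorem ordAt_smul_le [CompleteSpace F] {f : E → ℂ} {g : E → F}
    (hf : AnalyticAt ℂ f p) (hg : AnalyticAt ℂ g p) :
    ordAt (fun z => f z • g z) p ≤ ordAt f p + ordAt g p := by
  cases hn : ordAt f p with
  | top => simp
  | coe n =>
  cases hm : ordAt g p with
  | top => simp
  | coe m =>
  have hf_diag : ∃ v, iteratedFDeriv ℂ n f p (fun _ => v) ≠ 0 := not_forall.1 <|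
    mt (iteratedFDeriv_eq_zero_iff_forall_diagonal hf.contDiffAt).2
      (iteratedFDeriv_ne_zero_of_ordAt_eq hn)
  have hg_diag : ∃ v, iteratedFDeriv ℂ m g p (fun _ => v) ≠ 0 := not_forall.1 <|
    mt (iteratedFDeriv_eq_zero_iff_forall_diagonal hg.contDiffAt).2
      (iteratedFDeriv_ne_zero_of_ordAt_eq hm)
  obtain ⟨v, hfv, hgv⟩ : ∃ v, iteratedFDeriv ℂ n f p (fun _ => v) ≠ 0 ∧
      iteratedFDeriv ℂ m g p (fun _ => v) ≠ 0 :=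
    (dense_setOf_ne_zero (analyticAt_apply_diagonal _) hg_diag).inter_open_nonempty _
      (isOpen_ne_fun (by fun_prop) continuous_const) hf_diag
  calc ordAt (fun z => f z • g z) p
      ≤ analyticOrderAt (fun t : ℂ => f (p + t • v) • g (p + t • v)) 0 :=
        ordAt_le_analyticOrderAt_comp_add_smul (hf.smul hg) v
    _ = analyticOrderAt (fun t : ℂ => f (p + t • v)) 0
          + analyticOrderAt (fun t : ℂ => g (p + t • v)) 0 :=
        analyticOrderAt_smul (analyticAt_comp_add_smul (by simpa using hf))
          (analyticAt_comp_add_smul (by simpa using hg))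
    _ ≤ n + m := add_le_add
        (analyticOrderAt_comp_add_smul_le_of_iteratedFDeriv_ne_zero hf hfv)
        (analyticOrderAt_comp_add_smul_le_of_iteratedFDeriv_ne_zero hg hgv)

theorem analyticOrderAt_le_analyticOrderAt_clm_apply {L : ℂ → F →L[ℂ] G} {w : ℂ → F} {t : ℂ}
    (hL : AnalyticAt ℂ L t) (hw : AnalyticAt ℂ w t) :
    analyticOrderAt L t ≤ analyticOrderAt (fun s => L s (w s)) t := by
  refine ENat.forall_natCast_le_iff_le.1 fun n hn => ?_
  obtain ⟨L₁, hL₁, L_eq⟩ := (natCast_le_analyticOrderAt hL).1 hn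
  refine (natCast_le_analyticOrderAt (analyticAt_clm_apply hL hw)).2
    ⟨fun s => L₁ s (w s), analyticAt_clm_apply hL₁ hw, ?_⟩
  filter_upwards [L_eq] with s hs
  rw [hs, smul_apply]

theorem ordAt_le_ordAt_clm_apply [CompleteSpace G] {L : E → F →L[ℂ] G} {w : E → F}
    (hL : AnalyticAt ℂ L p) (hw : AnalyticAt ℂ w p) :
    ordAt L p ≤ ordAt (fun z => L z (w z)) p := by
  rw [ordAt_eq_iInf_analyticOrderAt (analyticAt_clm_apply hL hw)]
  refine le_iInf fun v => (ordAt_le_analyticOrderAt_comp_add_smul hL v).trans ?_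
  exact analyticOrderAt_le_analyticOrderAt_clm_apply
    (analyticAt_comp_add_smul (by simpa using hL))
    (analyticAt_comp_add_smul (by simpa using hw))

end Products

section Jacobian

theorem analyticAt_matrix_det {E ι : Type*} [NormedAddCommGroup E] [NormedSpace ℂ E]
    [Fintype ι] [DecidableEq ι] {M : E → Matrix ι ι ℂ} {p : E}
    (hM : ∀ i j, AnalyticAt ℂ (fun z => M z i j) p) : AnalyticAt ℂ (fun z => (M z).det) p := by
  simp only [Matrix.det_apply]
  exact Finset.analyticAt_fun_sum _ fun σ _ =>
    (Finset.analyticAt_fun_prod _ fun i _ => hM (σ i) i).const_smul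

variable {D E F : Type*} [NormedAddCommGroup D] [NormedSpace ℂ D]
  [NormedAddCommGroup E] [NormedSpace ℂ E] [NormedAddCommGroup F] [NormedSpace ℂ F]

theorem det_fderiv_comp {g₁ g₂ : E → E} {x : E} (hg₁ : DifferentiableAt ℂ g₁ (g₂ x))
    (hg₂ : DifferentiableAt ℂ g₂ x) :
    (fderiv ℂ (g₁ ∘ g₂) x).det = (fderiv ℂ g₁ (g₂ x)).det * (fderiv ℂ g₂ x).det := by
  rw [fderiv_comp x hg₁ hg₂]
  exact LinearMap.det_comp _ _

theorem analyticAt_iterate {g : E → E} (hg : ∀ z, AnalyticAt ℂ g z) (n : ℕ) (z : E) :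
    AnalyticAt ℂ (g^[n]) z := by
  induction n with
  | zero => exact analyticAt_id
  | succ n ih => rw [Function.iterate_succ']; exact (hg _).comp ih

variable [FiniteDimensional ℂ E]

theorem analyticAt_toMatrix_apply {ι : Type*} [Fintype ι] [DecidableEq ι]
    (b : Module.Basis ι ℂ E) {A : D → E →L[ℂ] E} {p : D} (hA : AnalyticAt ℂ A p) (i j : ι) :
    AnalyticAt ℂ (fun z => LinearMap.toMatrix b b (A z : E →ₗ[ℂ] E) i j) p := by
  simp only [LinearMap.toMatrix_apply]
  exact ((b.coord i).toContinuousLinearMap.analyticAt _).comp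
    (analyticAt_clm_apply hA analyticAt_const)

theorem analyticAt_clm_det {A : D → E →L[ℂ] E} {p : D} (hA : AnalyticAt ℂ A p) :
    AnalyticAt ℂ (fun z => (A z).det) p := by
  let b := Module.finBasis ℂ E
  simp only [ContinuousLinearMap.det, ← LinearMap.det_toMatrix b]
  exact analyticAt_matrix_det (analyticAt_toMatrix_apply b hA)

theorem exists_analyticAt_clm_apply_eq_det_smul {A : D → E →L[ℂ] E} {p : D}
    (hA : AnalyticAt ℂ A p) (v : E) :
    ∃ w : D → E, AnalyticAt ℂ w p ∧ ∀ z, A z (w z) = (A z).det • v := by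
  let b := Module.finBasis ℂ E
  let M z := LinearMap.toMatrix b b (A z : E →ₗ[ℂ] E)
  let w z := b.equivFun.symm ((M z).cramer (b.repr v))
  have cramer_analytic (i) : AnalyticAt ℂ (fun z => (M z).cramer (b.repr v) i) p := by
    simp only [Matrix.cramer_apply]
    refine analyticAt_matrix_det fun j l => ?_
    simp only [Matrix.updateCol_apply]
    split_ifs
    · exact analyticAt_const
    · exact analyticAt_toMatrix_apply b hA j l
  refine ⟨w, ?_, fun z => b.repr.injective (DFunLike.coe_injective ?_)⟩
  · simp only [w, Module.Basis.equivFun_symm_apply]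
    exact Finset.analyticAt_fun_sum _ fun i _ => (cramer_analytic i).smul analyticAt_const
  · have repr_w : ⇑(b.repr (w z)) = (M z).cramer (b.repr v) := b.equivFun.apply_symm_apply _
    calc ⇑(b.repr (A z (w z))) = M z *ᵥ b.repr (w z) :=
          (LinearMap.toMatrix_mulVec_repr b b (A z : E →ₗ[ℂ] E) (w z)).symm
      _ = (M z).det • ⇑(b.repr v) := by rw [repr_w, Matrix.mulVec_cramer]
      _ = ⇑(b.repr ((A z).det • v)) := by
          rw [map_smul, Finsupp.coe_smul, ContinuousLinearMap.det, LinearMap.det_toMatrix]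

theorem analyticAt_det_fderiv {g : E → E} {x : E} (hg : AnalyticAt ℂ g x) :
    AnalyticAt ℂ (fun z => (fderiv ℂ g z).det) x :=
  have := FiniteDimensional.complete ℂ E
  analyticAt_clm_det hg.fderiv

variable [CompleteSpace F]

theorem ordAt_comp_le_add_ordAt_fderiv_apply_comp {g : E → E} {h : E → F} {x : E}
    (hg : AnalyticAt ℂ g x) (hh : AnalyticAt ℂ h (g x)) (v : E) :
    ordAt (h ∘ g) x ≤ 1 + ordAt (fun z => (fderiv ℂ g z).det) x
      + ordAt ((fun y => fderiv ℂ h y v) ∘ g) x := by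
  have := FiniteDimensional.complete ℂ E
  obtain ⟨w, hw, cramer⟩ := exists_analyticAt_clm_apply_eq_det_smul hg.fderiv v
  have chain_rule : (fun z => fderiv ℂ (h ∘ g) z (w z)) =ᶠ[𝓝 x]
      fun z => (fderiv ℂ g z).det • fderiv ℂ h (g z) v := by
    filter_upwards [hg.eventually_analyticAt,
      hg.continuousAt.eventually hh.eventually_analyticAt] with z hgz hhz
    rw [fderiv_comp z hhz.differentiableAt hgz.differentiableAt, ContinuousLinearMap.comp_apply,
      cramer, map_smul]
  calc ordAt (h ∘ g) x ≤ ordAt (fderiv ℂ (h ∘ g)) x + 1 := ordAt_le_ordAt_fderiv_add_one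
    _ ≤ ordAt (fun z => fderiv ℂ (h ∘ g) z (w z)) x + 1 := by
        gcongr
        exact ordAt_le_ordAt_clm_apply (hh.comp hg).fderiv hw
    _ = ordAt (fun z => (fderiv ℂ g z).det • fderiv ℂ h (g z) v) x + 1 := by
        rw [ordAt_congr chain_rule]
    _ ≤ ordAt (fun z => (fderiv ℂ g z).det) x
          + ordAt ((fun y => fderiv ℂ h y v) ∘ g) x + 1 := by
        gcongr
        exact ordAt_smul_le (analyticAt_det_fderiv hg)
          ((analyticAt_clm_apply hh.fderiv analyticAt_const).comp hg)
    _ = _ := by ring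

theorem ordAt_comp_le {g : E → E} {h : E → F} {x : E}
    (hg : AnalyticAt ℂ g x) (hh : AnalyticAt ℂ h (g x)) :
    ordAt (h ∘ g) x ≤ (1 + ordAt (fun z => (fderiv ℂ g z).det) x) * ordAt h (g x) := by
  cases hc : ordAt h (g x) with
  | top => simp [ENat.mul_top]
  | coe c =>
  replace hc := hc.le
  induction c generalizing h with
  | zero =>
    have h_ne_zero : h (g x) ≠ 0 := fun h_eq_zero => by
      obtain ⟨v, hv⟩ := exists_ordAt_fderiv_apply_add_one_le hh h_eq_zero
      simpa using hv.trans hc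
    simp [ordAt_eq_zero_of_ne_zero (f := h ∘ g) h_ne_zero]
  | succ c ih =>
    by_cases h_eq_zero : h (g x) = 0
    · obtain ⟨v, hv⟩ := exists_ordAt_fderiv_apply_add_one_le hh h_eq_zero
      have fderiv_order_le : ordAt (fun y => fderiv ℂ h y v) (g x) ≤ c := by
        refine (ENat.add_le_add_iff_right ENat.one_ne_top).1 ?_
        exact_mod_cast hv.trans hc
      calc ordAt (h ∘ g) x
          ≤ 1 + ordAt (fun z => (fderiv ℂ g z).det) x
              + ordAt ((fun y => fderiv ℂ h y v) ∘ g) x :=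
            ordAt_comp_le_add_ordAt_fderiv_apply_comp hg hh v
        _ ≤ 1 + ordAt (fun z => (fderiv ℂ g z).det) x
              + (1 + ordAt (fun z => (fderiv ℂ g z).det) x) * c := by
            gcongr
            exact ih (analyticAt_clm_apply hh.fderiv analyticAt_const) fderiv_order_le
        _ = (1 + ordAt (fun z => (fderiv ℂ g z).det) x) * (c + 1 : ℕ) := by
            push_cast
            ring
    · simp [ordAt_eq_zero_of_ne_zero (f := h ∘ g) h_eq_zero]

theorem ordAt_det_fderiv_iterate_ne_top {g : E → E} (hg : ∀ z, AnalyticAt ℂ g z)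
    (hJ : ∃ z, (fderiv ℂ g z).det ≠ 0) (n : ℕ) (x : E) :
    ordAt (fun z => (fderiv ℂ (g^[n]) z).det) x ≠ ⊤ := by
  induction n with
  | zero =>
    have det_id_ne_zero : (fderiv ℂ (g^[0]) x).det ≠ 0 := by simp [ContinuousLinearMap.det]
    rw [ordAt_eq_zero_of_ne_zero (f := fun z => (fderiv ℂ (g^[0]) z).det) det_id_ne_zero]
    exact ENat.zero_ne_top
  | succ n ih =>
    have hgn := analyticAt_iterate hg n
    have det_iterate_succ : (fun z => (fderiv ℂ (g^[n + 1]) z).det) =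
        fun z => ((fun y => (fderiv ℂ g y).det) ∘ g^[n]) z • (fderiv ℂ (g^[n]) z).det := by
      funext z
      rw [Function.iterate_succ',
        det_fderiv_comp (hg _).differentiableAt (hgn z).differentiableAt]
      rfl
    have comp_ne_top : ordAt ((fun y => (fderiv ℂ g y).det) ∘ g^[n]) x ≠ ⊤ :=
      ne_top_of_le_ne_top
        (WithTop.mul_ne_top (WithTop.add_ne_top.2 ⟨ENat.one_ne_top, ih⟩)
          (ordAt_ne_top (fun z => analyticAt_det_fderiv (hg z)) hJ (g^[n] x)))
        (ordAt_comp_le (hgn x) (analyticAt_det_fderiv (hg _)))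
    rw [det_iterate_succ]
    exact ne_top_of_le_ne_top (WithTop.add_ne_top.2 ⟨comp_ne_top, ih⟩)
      (ordAt_smul_le ((analyticAt_det_fderiv (hg _)).comp (hgn x))
        (analyticAt_det_fderiv (hgn x)))

end Jacobian

theorem jacobian_cocycle_comparison_general {E F : Type*}
    [NormedAddCommGroup E] [NormedSpace ℂ E] [FiniteDimensional ℂ E]
    [NormedAddCommGroup F] [NormedSpace ℂ F] [CompleteSpace F]
    {g : E → E} (hg : ∀ z, AnalyticAt ℂ g z) (hJ : ∃ z, (fderiv ℂ g z).det ≠ 0) (n : ℕ) :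
    (∃ z, (fderiv ℂ (g^[n]) z).det ≠ 0) ∧
    (∀ x, ordAt (fun z => (fderiv ℂ (g^[n]) z).det) x ≠ ⊤) ∧
    (∀ (h : E → F) (x : E), AnalyticAt ℂ h (g^[n] x) →
      ordAt (h ∘ g^[n]) x ≤
        (1 + ordAt (fun z => (fderiv ℂ (g^[n]) z).det) x) * ordAt h (g^[n] x)) := by
  have order_ne_top := ordAt_det_fderiv_iterate_ne_top hg hJ n
  refine ⟨?_, order_ne_top, fun h x hh => ordAt_comp_le (analyticAt_iterate hg n x) hh⟩
  by_contra! det_eq_zero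
  exact order_ne_top 0 (by rw [funext det_eq_zero]; exact ordAt_zero)

/-- Proposition 4.1 (i), smooth case `X = ℂ^k` with `C_X = 1`:
for `g : ℂ^k → ℂ^k` entire with Jacobian determinant not identically zero, the Jacobian
determinants of all the iterates `g^[n]` (`n ≥ 1`) are not identically zero, all the
values `μ_n(x) = k + ord_x(det D(g^n))` are finite, and for every entire `h : ℂ^k → ℂ`
not identically zero, `ord_x(h ∘ g^n) ≤ μ_n(x) · ord_{g^n(x)}(h)`. -/
theorem jacobian_cocycle_comparison
    (k : ℕ) (hk : 1 ≤ k) (g : (Fin k → ℂ) → (Fin k → ℂ))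
    (hg : ∀ z, AnalyticAt ℂ g z)
    (hJ : ∃ z, (fderiv ℂ g z).det ≠ 0) :
    (∀ n : ℕ, 1 ≤ n → ∃ z, (fderiv ℂ (g^[n]) z).det ≠ 0) ∧
    (∀ n : ℕ, 1 ≤ n → ∀ x : Fin k → ℂ,
      ordAt (fun z => (fderiv ℂ (g^[n]) z).det) x ≠ ⊤) ∧
    (∀ h : (Fin k → ℂ) → ℂ, (∀ z, AnalyticAt ℂ h z) → (∃ z, h z ≠ 0) →
      ∀ n : ℕ, 1 ≤ n → ∀ x : Fin k → ℂ,
        ordAt (h ∘ g^[n]) x ≤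
          ((k : ℕ∞) + ordAt (fun z => (fderiv ℂ (g^[n]) z).det) x)
            * ordAt h (g^[n] x)) := by
  have general := jacobian_cocycle_comparison_general (F := ℂ) hg hJ
  refine ⟨fun n _ => (general n).1, fun n _ => (general n).2.1, fun h hh _ n _ x => ?_⟩
  refine ((general n).2.2 h x (hh _)).trans ?_
  gcongr
  exact_mod_cast hk
end

section
/- Let k ≥ 1 and N ≥ 1 be integers, let U ⊆ ℂ^k be open, let f_1, …, f_N be complex-analytic functions on U, and let x_1, …, x_r ∈ U be finitely many points such that for each j, min_{1≤i≤N} ord_{x_j}(f_i) < ∞. Then there exists θ = (θ_1,…,θ_N) ∈ ℂ^N such that for every j = 1, …, r: ord_{x_j}(θ_1 f_1 + ⋯ + θ_N f_N) = min_{1≤i≤N} ord_{x_j}(f_i). -/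
/-!
Taking the `n`-th derivative at `p` commutes with finite linear combinations, so the order of a
combination of the `f i` is at least the minimum `n` of the orders of the `f i`. It exceeds `n` only
if the coefficients satisfy the linear condition that the combination of the `n`-th derivatives
vanishes, and this condition is not void because some `f i` has order exactly `n`. The coefficients
that are bad at one of finitely many points thus lie in a finite union of proper subspaces, which
does not exhaust the space of coefficients.
-/

open scoped ContDiff

section OrderOfVanishing

variable {E F : Type*} [NormedAddCommGroup E] [NormedSpace ℂ E]
  [NormedAddCommGroup F] [NormedSpace ℂ F] {f : E → F} {p : E} {n : ℕ}

theorem ordAt_le_of_iteratedFDeriv_ne_zero (h : iteratedFDeriv ℂ n f p ≠ 0) : ordAt f p ≤ n :=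
  sInf_le ⟨n, h, rfl⟩

theorem iteratedFDeriv_eq_zero_of_lt_ordAt (h : n < ordAt f p) : iteratedFDeriv ℂ n f p = 0 :=
  not_ne_iff.mp fun hn => (ordAt_le_of_iteratedFDeriv_ne_zero hn).not_gt h

theorem le_ordAt_iff {a : ℕ∞} :
    a ≤ ordAt f p ↔ ∀ m : ℕ, iteratedFDeriv ℂ m f p ≠ 0 → a ≤ m := by
  simp only [ordAt, le_sInf_iff, Set.forall_mem_image, Set.mem_ofPred_eq]

theorem iteratedFDeriv_toNat_ordAt_ne_zero (h : ordAt f p ≠ ⊤) :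
    iteratedFDeriv ℂ (ordAt f p).toNat f p ≠ 0 := by
  have hne : ((fun m : ℕ => (m : ℕ∞)) '' {m | iteratedFDeriv ℂ m f p ≠ 0}).Nonempty :=
    Set.nonempty_iff_ne_empty.mpr fun hempty => h (by rw [ordAt, hempty, sInf_empty])
  obtain ⟨m, hm, hmord⟩ : ordAt f p ∈ _ := csInf_mem hne
  rwa [← hmord, ENat.toNat_natCast]

end OrderOfVanishing

theorem iteratedFDeriv_linearCombination_apply {𝕜 E F ι : Type*} [NontriviallyNormedField 𝕜]
    [NormedAddCommGroup E] [NormedSpace 𝕜 E] [NormedAddCommGroup F] [NormedSpace 𝕜 F]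
    {f : ι → E → F} {p : E} {n : ℕ} (hf : ∀ i, ContDiffAt 𝕜 n (f i) p) (θ : ι →₀ 𝕜) :
    iteratedFDeriv 𝕜 n (Finsupp.linearCombination 𝕜 f θ) p =
      Finsupp.linearCombination 𝕜 (fun i => iteratedFDeriv 𝕜 n (f i) p) θ := by
  simp only [Finsupp.linearCombination_apply, Finsupp.sum]
  rw [iteratedFDeriv_sum_apply (f := fun i => θ i • f i) fun i _ => (hf i).const_smul (θ i)]
  exact Finset.sum_congr rfl fun i _ => iteratedFDeriv_const_smul_apply (hf i)

section LinearCombination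

variable {E F ι : Type*} [NormedAddCommGroup E] [NormedSpace ℂ E]
  [NormedAddCommGroup F] [NormedSpace ℂ F] {f : ι → E → F} {p : E}

theorem iInf_ordAt_le_ordAt_linearCombination (hf : ∀ i, ContDiffAt ℂ ∞ (f i) p) (θ : ι →₀ ℂ) :
    ⨅ i, ordAt (f i) p ≤ ordAt (Finsupp.linearCombination ℂ f θ) p := by
  refine le_ordAt_iff.mpr fun m hm => not_lt.mp fun hlt => hm ?_
  have hzero : ∀ i, iteratedFDeriv ℂ m (f i) p = 0 := fun i =>
    iteratedFDeriv_eq_zero_of_lt_ordAt (hlt.trans_le (iInf_le _ i))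
  rw [iteratedFDeriv_linearCombination_apply fun i => (hf i).of_le (mod_cast le_top)]
  simp only [hzero, Finsupp.linearCombination_apply, Finsupp.sum, smul_zero, Finset.sum_const_zero]

/-- The subspace of coefficients `θ` for which `∑ i, θ i • f i` may vanish at `p` to higher order
than the minimum `n` of the orders of the `f i`: those killing the combination of the `n`-th
derivatives. When all the orders are `⊤`, `ENat.toNat` makes `n = 0` and the subspace is `⊤`. -/
noncomputable def orderRaisingSubmodule (f : ι → E → F) (p : E) : Submodule ℂ (ι →₀ ℂ) :=
  LinearMap.ker (Finsupp.linearCombination ℂ fun i =>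
    iteratedFDeriv ℂ (⨅ i, ordAt (f i) p).toNat (f i) p)

theorem orderRaisingSubmodule_ne_top (h : ⨅ i, ordAt (f i) p ≠ ⊤) :
    orderRaisingSubmodule f p ≠ ⊤ := by
  have : Nonempty ι := not_isEmpty_iff.mp fun _ => h (iInf_of_empty _)
  obtain ⟨i, hi⟩ := ENat.exists_eq_iInf fun i => ordAt (f i) p
  have hderiv : iteratedFDeriv ℂ (⨅ i, ordAt (f i) p).toNat (f i) p ≠ 0 := by
    rw [← hi] at h ⊢
    exact iteratedFDeriv_toNat_ordAt_ne_zero h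
  intro htop
  have hsingle : Finsupp.single i 1 ∈ orderRaisingSubmodule f p := htop ▸ Submodule.mem_top
  rw [orderRaisingSubmodule, LinearMap.mem_ker, Finsupp.linearCombination_single, one_smul]
    at hsingle
  exact hderiv hsingle

theorem ordAt_linearCombination_eq_iInf_of_notMem (hf : ∀ i, ContDiffAt ℂ ∞ (f i) p) {θ : ι →₀ ℂ}
    (hθ : θ ∉ orderRaisingSubmodule f p) :
    ordAt (Finsupp.linearCombination ℂ f θ) p = ⨅ i, ordAt (f i) p := by
  refine le_antisymm ?_ (iInf_ordAt_le_ordAt_linearCombination hf θ)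
  refine (ordAt_le_of_iteratedFDeriv_ne_zero ?_).trans (ENat.natCast_toNat_le_self _)
  rwa [iteratedFDeriv_linearCombination_apply fun i => (hf i).of_le (mod_cast le_top)]

theorem simultaneous_generic_linear_combination_general {κ : Type*} [Finite κ] {x : κ → E}
    (hf : ∀ i j, ContDiffAt ℂ ∞ (f i) (x j)) :
    ∃ θ : ι →₀ ℂ, ∀ j,
      ordAt (Finsupp.linearCombination ℂ f θ) (x j) = ⨅ i, ordAt (f i) (x j) := by
  obtain ⟨θ, hθ⟩ := Submodule.exists_forall_notMem_of_forall_ne_top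
    (fun j : {j // ⨅ i, ordAt (f i) (x j) ≠ ⊤} => orderRaisingSubmodule f (x j))
    fun j => orderRaisingSubmodule_ne_top j.2
  refine ⟨θ, fun j => ?_⟩
  by_cases hj : ⨅ i, ordAt (f i) (x j) = ⊤
  · rw [hj, ← top_le_iff, ← hj]
    exact iInf_ordAt_le_ordAt_linearCombination (hf · j) θ
  · exact ordAt_linearCombination_eq_iInf_of_notMem (hf · j) (hθ ⟨j, hj⟩)

end LinearCombination

/-- core of Lemma 5.5: given analytic `f_1, …, f_N` on an open
`U ⊆ ℂ^k` and finitely many points `x_1, …, x_r ∈ U` at each of which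
`min_i ord_{x_j}(f_i) < ∞`, there is a single `θ ∈ ℂ^N` such that
`ord_{x_j}(Σ θ_i f_i) = min_i ord_{x_j}(f_i)` simultaneously for all `j`. -/
theorem simultaneous_generic_linear_combination
    (k N : ℕ) (hk : 1 ≤ k) (hN : 1 ≤ N)
    (U : Set (Fin k → ℂ)) (hU : IsOpen U)
    (f : Fin N → (Fin k → ℂ) → ℂ) (hf : ∀ i, ∀ z ∈ U, AnalyticAt ℂ (f i) z)
    (r : ℕ) (x : Fin r → (Fin k → ℂ)) (hx : ∀ j, x j ∈ U)
    (hfin : ∀ j, (⨅ i, ordAt (f i) (x j)) ≠ ⊤) :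
    ∃ θ : Fin N → ℂ, ∀ j : Fin r,
      ordAt (fun z => ∑ i, θ i * f i z) (x j) = ⨅ i, ordAt (f i) (x j) := by
  obtain ⟨θ, hθ⟩ := simultaneous_generic_linear_combination_general
    fun i j => (hf i (x j) (hx j)).contDiffAt
  exact ⟨θ, by simpa [Finsupp.linearCombination_apply, Finsupp.sum_fintype, Finset.sum_fn] using hθ⟩
end
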